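/- arXiv:1911.07807 — 2 statements merged into one kernel-verified Lean document; each statement's English description precedes it below -/
import Mathlib

section
/- Let G be a group, let H be a subgroup of G that has finite height in G, and let K be a subgroup of H that has finite height in H. Then K has finite height in G. -/
/-!
If `H` has height at most `n` in `G` and `K` has height at most `m` in `H`, then `K` has height at
most `n * m` in `G`. Given `n * m + 1` distinct left cosets of `K`, look at the left cosets of `H`
containing them. If at least `n + 1` cosets of `H` occur, the intersection of the conjugates of `K`
lies in an intersection of `n + 1` essentially distinct conjugates of `H`. Otherwise, by the
pigeonhole principle, `m + 1` of the cosets of `K` lie in one coset `c H`; they have the form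
`c h K` with `h ∈ H`, and the intersection of the corresponding conjugates is the `c`-conjugate of
an intersection of `m + 1` essentially distinct conjugates of `K` in `H`.
-/

/-- The conjugate subgroup `g H g⁻¹`. -/
def conjSubgroup {G : Type*} [Group G] (g : G) (H : Subgroup G) : Subgroup G :=
  Subgroup.map (MulAut.conj g).toMonoidHom H

/-- `H` has height at most `n` in `G`: for any `n + 1` elements of `G` representing pairwise
distinct left cosets of `H`, the intersection of the corresponding conjugates of `H` is
finite. -/
def HeightLE {G : Type*} [Group G] (H : Subgroup G) (n : ℕ) : Prop :=
  ∀ g : Fin (n + 1) → G,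
    (∀ i j, i ≠ j → (g i)⁻¹ * g j ∉ H) →
    (((⨅ i, conjSubgroup (g i) H) : Subgroup G) : Set G).Finite

/-- `H` has finite height in `G`: it has height at most `n` for some `n`. -/
def FiniteHeight {G : Type*} [Group G] (H : Subgroup G) : Prop :=
  ∃ n : ℕ, HeightLE H n

lemma mem_conjSubgroup {G : Type*} [Group G] {g x : G} {H : Subgroup G} :
    x ∈ conjSubgroup g H ↔ g⁻¹ * x * g ∈ H := by
  unfold conjSubgroup
  rw [Subgroup.mem_map]
  constructor
  · rintro ⟨y, hy, rfl⟩
    simpa [mul_assoc] using hy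
  · intro h
    exact ⟨_, h, by simp [mul_assoc]⟩

/-- If `H` has finite height in `G` and `K ≤ H` has finite height in `H`, then `K` has
finite height in `G`. -/
theorem finiteHeight_trans {G : Type*} [Group G] (H K : Subgroup G) (hKH : K ≤ H)
    (hH : FiniteHeight H) (hK : FiniteHeight (K.subgroupOf H)) : FiniteHeight K := by
  classical
  obtain ⟨n, hn⟩ := hH
  obtain ⟨m, hm⟩ := hK
  refine ⟨n * m, fun g hg => ?_⟩
  let f : Fin (n * m + 1) → G ⧸ H := fun i => (g i : G ⧸ H)
  by_cases hcard : n + 1 ≤ (Finset.univ.image f).card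
  · -- At least `n + 1` cosets of `H` occur: choose one index in each of `n + 1` of them.
    obtain ⟨e⟩ : Nonempty (Fin (n + 1) ↪ (Finset.univ.image f)) :=
      Function.Embedding.nonempty_of_card_le (by simpa using hcard)
    have hpre : ∀ j, ∃ i, f i = (e j : G ⧸ H) := fun j => by
      obtain ⟨i, -, hi⟩ := Finset.mem_image.1 (e j).2
      exact ⟨i, hi⟩
    choose a ha using hpre
    refine (hn (fun j => g (a j)) fun i j hij hmem => hij ?_).subset ?_
    · apply e.injective
      apply Subtype.ext
      rw [← ha i, ← ha j]
      exact QuotientGroup.eq.2 hmem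
    · intro x hx
      simp only [SetLike.mem_coe, Subgroup.mem_iInf, mem_conjSubgroup] at hx ⊢
      exact fun j => hKH (hx (a j))
  · -- At most `n` cosets of `H` occur, so one of them contains more than `m` of the `g i`.
    obtain ⟨q, -, hq⟩ := Finset.exists_lt_card_fiber_of_mul_lt_card_of_maps_to
      (s := Finset.univ) (t := Finset.univ.image f) (f := f) (n := m)
      (fun i hi => Finset.mem_image_of_mem f hi) (by
        rw [Finset.card_univ, Fintype.card_fin]
        exact Nat.lt_succ_of_le (Nat.mul_le_mul_right m (by omega)))
    obtain ⟨e⟩ : Nonempty (Fin (m + 1) ↪ (Finset.univ.filter fun i => f i = q)) :=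
      Function.Embedding.nonempty_of_card_le (by
        rw [Fintype.card_fin, Fintype.card_coe]; exact hq)
    have he : ∀ j, f (e j) = q := fun j => (Finset.mem_filter.1 (e j).2).2
    let c : G := g (e 0)
    let h : Fin (m + 1) → H := fun j =>
      ⟨c⁻¹ * g (e j), QuotientGroup.eq.1 ((he 0).trans (he j).symm)⟩
    have hfin := hm h fun i j hij hmem => by
      refine hg (e i) (e j) (fun heq => hij (e.injective (Subtype.ext heq))) ?_
      simpa [h, Subgroup.mem_subgroupOf, mul_assoc] using hmem
    refine (hfin.image fun y : H => c * (y : G) * c⁻¹).subset fun x hx => ?_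
    simp only [SetLike.mem_coe, Subgroup.mem_iInf, mem_conjSubgroup] at hx
    refine ⟨⟨c⁻¹ * x * c, hKH (hx (e 0))⟩, ?_, by simp [mul_assoc]⟩
    simp only [SetLike.mem_coe, Subgroup.mem_iInf, mem_conjSubgroup]
    intro j
    simpa [h, Subgroup.mem_subgroupOf, mul_assoc] using hx (e j)
end

section
/- Let G be a group, let H be a subgroup of G that has finite height in G and has infinite index in G, and let N be a normal subgroup of G such that every subgroup of N that has finite height in N is either finite or of finite index in N. Then the intersection H ∩ N is finite. -/
theorem FiniteHeight.subgroupOf {G : Type*} [Group G] {H : Subgroup G} (h : FiniteHeight H)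
    (N : Subgroup G) : FiniteHeight (H.subgroupOf N) := by
  obtain ⟨n, hn⟩ := h
  refine ⟨n, fun g hg => ?_⟩
  have hfin := hn (fun i => (g i : G)) fun i j hij hmem =>
    hg i j hij (by simpa [Subgroup.mem_subgroupOf] using hmem)
  refine Set.Finite.of_finite_image (f := ((↑) : N → G)) (hfin.subset ?_)
    Subtype.val_injective.injOn
  rintro _ ⟨x, hx, rfl⟩
  simp only [SetLike.mem_coe, Subgroup.mem_iInf] at hx ⊢
  intro i
  obtain ⟨y, hy, hyx⟩ := hx i
  exact ⟨y, hy, by rw [← hyx]; simp⟩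

theorem relIndex_conjSubgroup {G : Type*} [Group G] (H N : Subgroup G) [N.Normal] (g : G) :
    (conjSubgroup g H).relIndex N = H.relIndex N := by
  have hmap : N.map (MulAut.conj g).toMonoidHom = N := Subgroup.Normal.map_conj_eq N g
  unfold conjSubgroup
  conv_lhs => rw [← hmap]
  exact Subgroup.relIndex_map_map_of_injective _ _ (MulAut.conj g).injective

/-- If `H` is a finite-height subgroup of infinite index in `G` and `N` is a normal
subgroup of `G` all of whose finite-height subgroups are finite or of finite index in `N`,
then `H ∩ N` is finite. -/
theorem finite_inter_normal_of_finiteHeight {G : Type*} [Group G]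
    (H N : Subgroup G) (hN : N.Normal)
    (hNsub : ∀ B : Subgroup N, FiniteHeight B →
      ((B : Subgroup N) : Set N).Finite ∨ B.FiniteIndex)
    (hidx : H.index = 0) (hfh : FiniteHeight H) :
    (((H ⊓ N) : Subgroup G) : Set G).Finite := by
  rcases hNsub _ (hfh.subgroupOf N) with hfin | hfi
  · refine (hfin.image ((↑) : N → G)).subset ?_
    rintro x ⟨hxH, hxN⟩
    exact ⟨⟨x, hxN⟩, hxH, rfl⟩
  · obtain ⟨n, hn⟩ := hfh
    have : Infinite (G ⧸ H) := Subgroup.index_eq_zero_iff_infinite.mp hidx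
    let e : Fin (n + 1) ↪ G ⧸ H := Fin.valEmbedding.trans (Infinite.natEmbedding (G ⧸ H))
    let g : Fin (n + 1) → G := fun i => (e i).out
    have hK := hn g fun i j hij hmem => hij (e.injective (by
      have h := QuotientGroup.eq.mpr hmem
      simpa [g] using h))
    set K : Subgroup G := ⨅ i, conjSubgroup (g i) H
    have hKN : K.relIndex N ≠ 0 := Subgroup.relIndex_iInf_ne_zero fun i => by
      rw [relIndex_conjSubgroup]
      exact hfi.index_ne_zero
    have : Finite K := hK.to_subtype
    have : Finite (K.subgroupOf N) :=
      Finite.of_injective (fun x => (⟨x.1.1, x.2⟩ : K)) fun x y hxy =>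
        Subtype.ext (Subtype.ext (Subtype.mk.inj hxy))
    have hcard : Nat.card N ≠ 0 := by
      rw [← Subgroup.card_mul_index (K.subgroupOf N)]
      exact mul_ne_zero Nat.card_pos.ne' hKN
    have : Finite N := Nat.finite_of_card_ne_zero hcard
    exact (Set.toFinite (N : Set G)).subset fun x hx => hx.2
end
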